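/- Let γ₁, …, γ_M be nonnegative measurable real random variables on a probability space (no independence required), let M ≥ 1, and let R₁ ≥ 0. Then Pr[∏_{l=1}^M (1 + γ_l) ≤ 2^{R₁}] ≤ Pr[∏_{l=1}^M γ_l ≤ (2^{R₁/M} − 1)^M]. -/

import Mathlib

open MeasureTheory ProbabilityTheory Real

/-!
Applying the weighted AM-GM inequality to the fractions `x i / (x i + y i)` and to
`y i / (x i + y i)` and adding the results shows that the geometric mean is superadditive.
Taking `y = 1` and equal weights gives `1 + (∏ x i) ^ (1 / n) ≤ (∏ (1 + x i)) ^ (1 / n)` for `n`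
factors, so the first event is contained in the second wherever all SNRs are nonnegative.
-/

section GeometricMean

variable {ι : Type*} {s : Finset ι} {w x y : ι → ℝ}

theorem prod_rpow_add_prod_rpow_le_one (hw : ∀ i ∈ s, 0 ≤ w i) (hw_sum : ∑ i ∈ s, w i = 1)
    (hx : ∀ i ∈ s, 0 ≤ x i) (hy : ∀ i ∈ s, 0 ≤ y i) (hxy : ∀ i ∈ s, x i + y i ≤ 1) :
    ∏ i ∈ s, x i ^ w i + ∏ i ∈ s, y i ^ w i ≤ 1 :=
  calc
    ∏ i ∈ s, x i ^ w i + ∏ i ∈ s, y i ^ w i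
      ≤ ∑ i ∈ s, w i * x i + ∑ i ∈ s, w i * y i :=
        add_le_add (geom_mean_le_arith_mean_weighted s w x hw hw_sum hx)
          (geom_mean_le_arith_mean_weighted s w y hw hw_sum hy)
    _ = ∑ i ∈ s, w i * (x i + y i) := by simp only [mul_add, Finset.sum_add_distrib]
    _ ≤ ∑ i ∈ s, w i := Finset.sum_le_sum fun i hi => mul_le_of_le_one_right (hw i hi) (hxy i hi)
    _ = 1 := hw_sum

theorem prod_div_rpow_mul_prod_rpow (hx : ∀ i ∈ s, 0 ≤ x i) (hy : ∀ i ∈ s, 0 ≤ y i)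
    (hyx : ∀ i ∈ s, y i = 0 → x i = 0) :
    (∏ i ∈ s, (x i / y i) ^ w i) * ∏ i ∈ s, y i ^ w i = ∏ i ∈ s, x i ^ w i := by
  rw [← Finset.prod_mul_distrib]
  refine Finset.prod_congr rfl fun i hi => ?_
  rw [← mul_rpow (div_nonneg (hx i hi) (hy i hi)) (hy i hi), div_mul_cancel_of_imp (hyx i hi)]

theorem prod_rpow_add_prod_rpow_le_prod_add_rpow
    (hw : ∀ i ∈ s, 0 ≤ w i) (hw_sum : ∑ i ∈ s, w i = 1)
    (hx : ∀ i ∈ s, 0 ≤ x i) (hy : ∀ i ∈ s, 0 ≤ y i) :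
    ∏ i ∈ s, x i ^ w i + ∏ i ∈ s, y i ^ w i ≤ ∏ i ∈ s, (x i + y i) ^ w i := by
  have hxy : ∀ i ∈ s, 0 ≤ x i + y i := fun i hi => add_nonneg (hx i hi) (hy i hi)
  have eq_zero : ∀ i ∈ s, x i + y i = 0 → x i = 0 ∧ y i = 0 := fun i hi =>
    (add_eq_zero_iff_of_nonneg (hx i hi) (hy i hi)).mp
  have fractions_le_one :
      ∏ i ∈ s, (x i / (x i + y i)) ^ w i + ∏ i ∈ s, (y i / (x i + y i)) ^ w i ≤ 1 :=
    prod_rpow_add_prod_rpow_le_one hw hw_sum (fun i hi => div_nonneg (hx i hi) (hxy i hi))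
      (fun i hi => div_nonneg (hy i hi) (hxy i hi))
      fun i _ => (add_div (x i) (y i) _).symm.trans_le (div_self_le_one _)
  calc
    ∏ i ∈ s, x i ^ w i + ∏ i ∈ s, y i ^ w i
      = (∏ i ∈ s, (x i / (x i + y i)) ^ w i + ∏ i ∈ s, (y i / (x i + y i)) ^ w i)
          * ∏ i ∈ s, (x i + y i) ^ w i := by
        rw [add_mul, prod_div_rpow_mul_prod_rpow hx hxy fun i hi h => (eq_zero i hi h).1,
          prod_div_rpow_mul_prod_rpow hy hxy fun i hi h => (eq_zero i hi h).2]
    _ ≤ ∏ i ∈ s, (x i + y i) ^ w i :=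
        mul_le_of_le_one_left (Finset.prod_nonneg fun i hi => rpow_nonneg (hxy i hi) _)
          fractions_le_one

end GeometricMean

section FiniteProduct

variable {ι : Type*} [Fintype ι] [Nonempty ι] {x : ι → ℝ}

theorem one_add_prod_rpow_inv_card_le (hx : ∀ i, 0 ≤ x i) :
    1 + (∏ i, x i) ^ (Fintype.card ι : ℝ)⁻¹ ≤ (∏ i, (1 + x i)) ^ (Fintype.card ι : ℝ)⁻¹ := by
  have superadditive := prod_rpow_add_prod_rpow_le_prod_add_rpow (s := Finset.univ)
    (w := fun _ : ι => (Fintype.card ι : ℝ)⁻¹) (x := fun _ => 1) (y := x)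
    (fun _ _ => by positivity) (by simp) (fun _ _ => zero_le_one) (fun i _ => hx i)
  rwa [finsetProd_rpow _ _ fun _ _ => zero_le_one, finsetProd_rpow _ _ fun i _ => hx i,
    finsetProd_rpow _ _ fun i _ => add_nonneg zero_le_one (hx i), Finset.prod_const_one,
    one_rpow] at superadditive

theorem prod_le_rpow_inv_card_sub_one_pow (hx : ∀ i, 0 ≤ x i) {t : ℝ}
    (ht : ∏ i, (1 + x i) ≤ t) :
    ∏ i, x i ≤ (t ^ (Fintype.card ι : ℝ)⁻¹ - 1) ^ Fintype.card ι := by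
  have hprod : 0 ≤ ∏ i, x i := Finset.prod_nonneg fun i _ => hx i
  have hprod_one_add : 0 ≤ ∏ i, (1 + x i) :=
    Finset.prod_nonneg fun i _ => add_nonneg zero_le_one (hx i)
  have geom_mean_le : (∏ i, x i) ^ (Fintype.card ι : ℝ)⁻¹ ≤ t ^ (Fintype.card ι : ℝ)⁻¹ - 1 :=
    le_sub_iff_add_le'.mpr <| (one_add_prod_rpow_inv_card_le hx).trans <|
      rpow_le_rpow hprod_one_add ht (by positivity)
  calc
    ∏ i, x i = ((∏ i, x i) ^ (Fintype.card ι : ℝ)⁻¹) ^ Fintype.card ι :=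
      (rpow_inv_natCast_pow hprod Fintype.card_ne_zero).symm
    _ ≤ (t ^ (Fintype.card ι : ℝ)⁻¹ - 1) ^ Fintype.card ι :=
      pow_le_pow_left₀ (rpow_nonneg hprod _) geom_mean_le _

end FiniteProduct

theorem outage_prob_upper_bound_general
    {Ω ι : Type*} [MeasurableSpace Ω] (μ : Measure Ω) [Fintype ι] [Nonempty ι]
    (γ : ι → Ω → ℝ) (hnonneg : ∀ᵐ ω ∂μ, ∀ l, 0 ≤ γ l ω) (R₁ : ℝ) :
    μ {ω | ∏ l, (1 + γ l ω) ≤ (2 : ℝ) ^ R₁}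
      ≤ μ {ω | ∏ l, γ l ω ≤ ((2 : ℝ) ^ (R₁ / Fintype.card ι) - 1) ^ Fintype.card ι} := by
  refine measure_mono_ae ?_
  filter_upwards [hnonneg] with ω hω outage
  have hprod := prod_le_rpow_inv_card_sub_one_pow hω outage
  rwa [← rpow_mul zero_le_two, ← div_eq_mul_inv] at hprod

/-- The outage probability bound:
`Pr[∏ (1 + γ_l) ≤ 2^{R₁}] ≤ Pr[∏ γ_l ≤ (2^{R₁/M} − 1)^M]` for nonnegative measurable
random variables `γ_l`, `M ≥ 1`, and `R₁ ≥ 0`. -/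
theorem outage_prob_upper_bound
    {Ω : Type*} [MeasureSpace Ω] [IsProbabilityMeasure (ℙ : Measure Ω)]
    (M : ℕ) (hM : 1 ≤ M) (γ : Fin M → Ω → ℝ) (hmeas : ∀ l, Measurable (γ l))
    (hnonneg : ∀ l ω, 0 ≤ γ l ω) (R₁ : ℝ) (hR₁ : 0 ≤ R₁) :
    ℙ {ω | ∏ l, (1 + γ l ω) ≤ (2 : ℝ) ^ R₁}
      ≤ ℙ {ω | ∏ l, γ l ω ≤ ((2 : ℝ) ^ (R₁ / M) - 1) ^ M} := by
  have : Nonempty (Fin M) := Fin.pos_iff_nonempty.mp hM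
  simpa only [Fintype.card_fin] using
    outage_prob_upper_bound_general ℙ γ (.of_forall fun ω l => hnonneg l ω) R₁
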